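/- Let G₁ be an r₁-regular graph on n₁ vertices and m₁ edges, let G₂ be a graph on n₂ vertices, and let α ∈ [0,1]. (1) If r₁ = 1, then the characteristic polynomial of A_α(G₁ ∨̲ G₂), where G₁ ∨̲ G₂ is the subdivision-edge join, satisfies ψ_{A_α(G₁ ∨̲ G₂)}(x) = (x−α)·ψ_{A_α(G₂)}(x−α)·( x² − α(3+n₂)x + (α²n₂+4α−2) − (1−α)²(x−α)·Γ_{A_α(G₂)}(x−α) ). (2) If r₁ ≥ 2, then ψ_{A_α(G₁ ∨̲ G₂)}(x) = (x−2α−αn₂)^{m₁−n₁} · ψ_{A_α(G₂)}(x−αm₁) · ( x² − α(2+r₁+n₂)x + r₁(α²n₂+4α−2) − m₁(1−α)²(x−αr₁)·Γ_{A_α(G₂)}(x−αm₁) ) · ∏_{i=2}^{n₁} ( x² − α(2+r₁+n₂)x + r₁(α²n₂+3α−1) − (1−α)λ_i(A_α(G₁)) ), where λ₁(A_α(G₁)) ≥ ⋯ ≥ λ_{n₁}(A_α(G₁)) are the A_α-eigenvalues of G₁. -/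

import Mathlib

open Matrix Polynomial
open scoped Classical

noncomputable section

/-- `A_α(G) = α·D(G) + (1-α)·A(G)`, where `D(G)` is the diagonal degree matrix and
`A(G)` the adjacency matrix. -/
def Aalpha {V : Type*} [Fintype V] (G : SimpleGraph V) (α : ℝ) : Matrix V V ℝ :=
  α • Matrix.diagonal (fun v => (G.degree v : ℝ)) + (1 - α) • G.adjMatrix ℝ

/-- The `M`-coronal `Γ_M(x) = 1ᵀ (xI − M)⁻¹ 1`, i.e. the sum of the entries of
`(xI − M)⁻¹`. -/
def coronal {n : Type*} [Fintype n] (M : Matrix n n ℝ) (x : ℝ) : ℝ :=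
  ∑ i, ∑ j, (x • (1 : Matrix n n ℝ) - M)⁻¹ i j

/-- The subdivision-edge join `G₁ ∨̲ G₂`: take the subdivision graph `S(G₁)` (a new
vertex inserted in each edge of `G₁`) together with `G₂`, and join every inserted
vertex of `S(G₁)` with every vertex of `G₂`. -/
def subdivisionEdgeJoin {V₁ V₂ : Type*} (G₁ : SimpleGraph V₁) (G₂ : SimpleGraph V₂) :
    SimpleGraph (V₁ ⊕ (↥G₁.edgeSet ⊕ V₂)) :=
  SimpleGraph.fromRel fun a b =>
    match a, b with
    | Sum.inl v, Sum.inr (Sum.inl e) => v ∈ (e : Sym2 V₁)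
    | Sum.inr (Sum.inl _), Sum.inr (Sum.inr _) => True
    | Sum.inr (Sum.inr u), Sum.inr (Sum.inr w) => G₂.Adj u w
    | _, _ => False

/-!
Since the vertices of `G₂` see the rest of the join only through the all-ones block, eliminating
them from `xI - A_α(G₁ ∨̲ G₂)` by a Schur complement produces the factor `ψ_{A_α(G₂)}` and replaces
the block of the inserted vertices by a combination of `I` and the all-ones matrix `J`, with the
coronal as coefficient. The block of `V(G₁)` is scalar, so a second elimination, with denominators
cleared, leaves the characteristic polynomial of a combination of `RᵀR` and `J`, where `R` is the
vertex-edge incidence matrix of `G₁`.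

If `r₁ = 1`, then `RᵀR = 2I`. If `r₁ ≥ 2`, then `XY` and `YX` have the same characteristic
polynomial up to a power of the variable, which turns `RᵀR` into `RRᵀ = r₁I + A(G₁)`, an affine
function of `A_α(G₁)`. The all-ones vector is an eigenvector of `A_α(G₁)` for the eigenvalue `r₁`,
which is the largest one by Gershgorin's theorem, so by Brauer's theorem adding a multiple of `J`
moves this eigenvalue only.
-/

section Determinants

variable {n m o R : Type*} [Fintype n] [Fintype m] [Fintype o]
  [DecidableEq n] [DecidableEq m] [DecidableEq o] [CommRing R]

theorem det_fromBlocks_mul_det_of_mul_eq_mul {A : Matrix n n R} {B : Matrix n m R}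
    {S : Matrix m m R} (h : A * B = B * S) (C : Matrix m n R) (D : Matrix m m R) :
    (fromBlocks A B C D).det * S.det = A.det * (D * S - C * B).det := by
  have hmul : fromBlocks A B C D * fromBlocks 1 (-B) 0 S = fromBlocks A 0 C (D * S - C * B) := by
    simp [fromBlocks_multiply, h, sub_eq_neg_add]
  simpa using congrArg det hmul

theorem det_fromBlocks_fromCols_fromRows_zero (A : Matrix n n R) (B : Matrix n m R)
    (C : Matrix m n R) (D : Matrix m m R) (E : Matrix m o R) (F : Matrix o m R)
    {G : Matrix o o R} (hG : IsUnit G.det) :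
    (fromBlocks A (fromCols B 0) (fromRows C 0) (fromBlocks D E F G)).det =
      G.det * (fromBlocks A B C (D - E * G⁻¹ * F)).det := by
  let _ : Invertible G := invertibleOfIsUnitDet G hG
  have hassoc : fromBlocks A (fromCols B 0) (fromRows C 0) (fromBlocks D E F G) =
      (fromBlocks (fromBlocks A B C D) (fromRows 0 E) (fromCols 0 F) G).submatrix
        (Equiv.sumAssoc n m o).symm (Equiv.sumAssoc n m o).symm := by
    ext (i | i | i) (j | j | j) <;> rfl
  have hschur : fromBlocks A B C D - fromRows 0 E * ⅟G * fromCols 0 F =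
      fromBlocks A B C (D - E * G⁻¹ * F) := by
    ext (i | i) (j | j) <;> simp [fromRows_mul]
  rw [hassoc, det_submatrix_equiv_self, det_fromBlocks₂₂, hschur]

theorem mul_det_sub_vecMulVec_of_mulVec_eq_smul {N : Matrix n n R} {u : n → R} {s : R}
    (h : N *ᵥ u = s • u) (v : n → R) :
    s * (N - vecMulVec u v).det = (s - v ⬝ᵥ u) * N.det := by
  have hcol : N * replicateCol Unit u = replicateCol Unit u * s • (1 : Matrix Unit Unit R) := by
    rw [Matrix.mul_smul, Matrix.mul_one, ← replicateCol_mulVec, h, replicateCol_smul]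
  have hdet := det_fromBlocks_mul_det_of_mul_eq_mul hcol (replicateRow Unit v) 1
  rw [det_fromBlocks_one₂₂, ← vecMulVec_eq] at hdet
  simpa [mul_comm] using hdet

end Determinants

section Charpoly

variable {n m R : Type*} [Fintype n] [Fintype m] [DecidableEq n] [DecidableEq m] [CommRing R]

theorem eval_charpoly_eq_det_smul_one_sub (M : Matrix n n R) (t : R) :
    M.charpoly.eval t = (t • (1 : Matrix n n R) - M).det := by
  rw [eval_charpoly, scalar_apply, smul_one_eq_diagonal]

theorem eval_charpoly_smul_one_add (M : Matrix n n R) (s t : R) :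
    (s • (1 : Matrix n n R) + M).charpoly.eval t = M.charpoly.eval (t - s) := by
  simp only [eval_charpoly_eq_det_smul_one_sub, sub_smul, sub_sub]

theorem eval_charpoly_smul (M : Matrix n n R) (β t : R) :
    (β • M).charpoly.eval (β * t) = β ^ Fintype.card n * M.charpoly.eval t := by
  simp only [eval_charpoly_eq_det_smul_one_sub, mul_smul, ← smul_sub, det_smul]

theorem card_eq_card_of_charpoly_eq_prod {ι : Type*} [Fintype ι] [Nontrivial R] {M : Matrix n n R}
    {μ : ι → R} (hμ : M.charpoly = ∏ i, (X - C (μ i))) : Fintype.card n = Fintype.card ι := by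
  rw [← M.charpoly_natDegree_eq_dim, hμ, natDegree_finsetProd_X_sub_C_eq_card, Finset.card_univ]

theorem charpoly_smul_eq_prod {K ι : Type*} [Field K] [Infinite K] [Fintype ι]
    {M : Matrix n n K} {μ : ι → K} (hμ : M.charpoly = ∏ i, (X - C (μ i))) (β : K) :
    (β • M).charpoly = ∏ i, (X - C (β * μ i)) := by
  have hcard := card_eq_card_of_charpoly_eq_prod hμ
  rcases eq_or_ne β 0 with rfl | hβ
  · simp [hcard]
  refine Polynomial.funext fun t => ?_
  obtain ⟨s, rfl⟩ : ∃ s, t = β * s := ⟨t / β, by field_simp⟩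
  simp only [eval_charpoly_smul, hμ, eval_prod, eval_sub, eval_X, eval_C, hcard, ← mul_sub,
    Finset.prod_mul_distrib, Finset.prod_const, Finset.card_univ]

theorem charpoly_smul_vecMulVec_one (k : R) :
    (k • vecMulVec (1 : n → R) 1).charpoly =
      X ^ Fintype.card n - C (k * Fintype.card n) * X ^ (Fintype.card n - 1) := by
  rw [← smul_vecMulVec, charpoly_vecMulVec, smul_dotProduct, one_dotProduct_one, smul_eq_mul,
    smul_eq_C_mul]

/-- Brauer's theorem, with the division by `X - ρ` cleared so that it holds over any
commutative ring. -/
theorem X_sub_C_mul_charpoly_add_vecMulVec {M : Matrix n n R} {u : n → R} {ρ : R}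
    (h : M *ᵥ u = ρ • u) (v : n → R) :
    (X - C ρ) * (M + vecMulVec u v).charpoly = (X - C (ρ + v ⬝ᵥ u)) * M.charpoly := by
  have hu : M.charmatrix *ᵥ (C ∘ u) = (X - C ρ) • (C ∘ u) := by
    have hC : M.map C *ᵥ (C ∘ u) = C ρ • (C ∘ u) := by
      ext1 i
      rw [← RingHom.map_mulVec, h]
      simp
    rw [charmatrix, sub_mulVec, sub_smul, RingHom.mapMatrix_apply, hC, scalar_apply,
      ← smul_one_eq_diagonal, smul_mulVec, one_mulVec]
  have hMuv : (M + vecMulVec u v).charmatrix = M.charmatrix - vecMulVec (C ∘ u) (C ∘ v) := by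
    ext1 i j
    simp [charmatrix_apply, vecMulVec_apply, sub_sub]
  have hvu : (C ∘ v) ⬝ᵥ (C ∘ u) = C (v ⬝ᵥ u) := (RingHom.map_dotProduct C v u).symm
  rw [charpoly, hMuv, mul_det_sub_vecMulVec_of_mulVec_eq_smul hu, hvu, charpoly, C_add, sub_sub]

theorem charpoly_add_vecMulVec_eq_mul_prod {ι : Type*} [Fintype ι] [DecidableEq ι]
    {M : Matrix n n R} {μ : ι → R} (hμ : M.charpoly = ∏ i, (X - C (μ i))) {i₀ : ι} {u : n → R}
    (h : M *ᵥ u = μ i₀ • u) (v : n → R) :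
    (M + vecMulVec u v).charpoly =
      (X - C (μ i₀ + v ⬝ᵥ u)) * ∏ i with i ≠ i₀, (X - C (μ i)) := by
  refine (monic_X_sub_C (μ i₀)).isRegular.left ?_
  change _ * _ = _ * _
  rw [X_sub_C_mul_charpoly_add_vecMulVec h, hμ, mul_left_comm, Finset.filter_ne',
    Finset.mul_prod_erase _ (fun i => X - C (μ i)) (Finset.mem_univ i₀)]

theorem charpoly_transpose_mul_self_add_vecMulVec_one {K : Type*} [Field K] {B : Matrix n m K}
    {r s : K} (hrow : B *ᵥ 1 = r • 1) (hcol : 1 ᵥ* B = s • 1) (hs : s ≠ 0)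
    (hle : Fintype.card n ≤ Fintype.card m) (p q : K) :
    (p • (Bᵀ * B) + q • vecMulVec 1 1).charpoly =
      X ^ (Fintype.card m - Fintype.card n) *
        (p • (B * Bᵀ) + (q * r / s) • vecMulVec 1 1).charpoly := by
  set N : Matrix n n K := p • 1 + (q / s ^ 2) • vecMulVec 1 1 with hN
  have hcol' : Bᵀ *ᵥ 1 = s • 1 := by rw [mulVec_transpose, hcol]
  have hm : Bᵀ * (N * B) = p • (Bᵀ * B) + q • vecMulVec 1 1 := by
    rw [hN, Matrix.add_mul, Matrix.mul_add, Matrix.smul_mul, Matrix.smul_mul, Matrix.one_mul,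
      vecMulVec_mul, hcol, Matrix.mul_smul, Matrix.mul_smul, mul_vecMulVec, hcol', smul_vecMulVec,
      vecMulVec_smul, smul_smul, smul_smul]
    congr 2
    field_simp
  have hn : N * B * Bᵀ = p • (B * Bᵀ) + (q * r / s) • vecMulVec 1 1 := by
    rw [hN, Matrix.add_mul, Matrix.add_mul, Matrix.smul_mul, Matrix.smul_mul, Matrix.one_mul,
      Matrix.smul_mul, Matrix.smul_mul, vecMulVec_mul, vecMulVec_mul, hcol, vecMul_transpose,
      mulVec_smul, hrow, vecMulVec_smul, vecMulVec_smul, smul_smul, smul_smul]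
    congr 2
    field_simp
  rw [← hm, charpoly_mul_comm_of_le _ _ hle, hn]

end Charpoly

section Eigenvalues

variable {n : Type*} [Fintype n] [DecidableEq n]

theorem isRoot_charpoly_of_mulVec_eq_smul {R : Type*} [CommRing R] [IsDomain R]
    {M : Matrix n n R} {u : n → R} {t : R} (hu : u ≠ 0) (h : M *ᵥ u = t • u) :
    M.charpoly.IsRoot t := by
  rw [IsRoot.def, eval_charpoly_eq_det_smul_one_sub]
  exact exists_mulVec_eq_zero_iff.mp ⟨u, hu, by simp [sub_mulVec, smul_mulVec, h]⟩

theorem le_of_isRoot_charpoly_of_sum_row_le {M : Matrix n n ℝ} {ρ t : ℝ}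
    (hoff : ∀ i j, i ≠ j → 0 ≤ M i j) (hrow : ∀ i, ∑ j, M i j ≤ ρ) (ht : M.charpoly.IsRoot t) :
    t ≤ ρ := by
  rw [← charpoly_toLin', ← Module.End.hasEigenvalue_iff_isRoot_charpoly] at ht
  obtain ⟨k, hk⟩ := eigenvalue_mem_ball ht
  calc t ≤ M k k + ∑ j ∈ Finset.univ.erase k, ‖M k j‖ := by
        linarith [(abs_le.mp (Metric.mem_closedBall.mp hk)).2]
    _ = M k k + ∑ j ∈ Finset.univ.erase k, M k j := by
        congr 1
        exact Finset.sum_congr rfl fun j hj =>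
          Real.norm_of_nonneg (hoff k j (Finset.ne_of_mem_erase hj).symm)
    _ = ∑ j, M k j := Finset.add_sum_erase _ _ (Finset.mem_univ k)
    _ ≤ ρ := hrow k

end Eigenvalues

theorem eq_of_pow_mul_eq_pow_mul {𝕜 : Type*} [NontriviallyNormedField 𝕜] {f g : 𝕜 → 𝕜}
    (hf : Continuous f) (hg : Continuous g) {k : ℕ} (h : ∀ t, t ^ k * f t = t ^ k * g t) :
    f = g :=
  hf.ext_on (dense_compl_singleton 0) hg fun t ht => mul_left_cancel₀ (pow_ne_zero k ht) (h t)

section IncidenceBlocks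

variable {V E : Type*} [DecidableEq V] [DecidableEq E]

/-- The block matrix `[aI, -βB; -βBᵀ, bI - cJ]` with `J` the all-ones matrix. For an incidence
matrix `B` it is what remains of `xI - A_α(G₁ ∨̲ G₂)` once the vertices of `G₂` are eliminated:
then `β = 1 - α`, and `c` is `β²` times the coronal of `G₂`. -/
def incidenceBlocks (B : Matrix V E ℝ) (a b c β : ℝ) : Matrix (V ⊕ E) (V ⊕ E) ℝ :=
  fromBlocks (a • 1) (-β • B) (-β • Bᵀ) (b • 1 - c • vecMulVec 1 1)

variable [Fintype V] [Fintype E] (B : Matrix V E ℝ)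

theorem continuous_det_incidenceBlocks (b c β : ℝ) :
    Continuous fun a => (incidenceBlocks B a b c β).det :=
  (Continuous.matrix_fromBlocks (by fun_prop) continuous_const continuous_const
    continuous_const).matrix_det

theorem pow_card_mul_det_incidenceBlocks (a b c β : ℝ) :
    a ^ Fintype.card E * (incidenceBlocks B a b c β).det =
      a ^ Fintype.card V *
        (β ^ 2 • (Bᵀ * B) + (a * c) • vecMulVec 1 1).charpoly.eval (a * b) := by
  have hcomm : (a • (1 : Matrix V V ℝ)) * (-β • B) = (-β • B) * (a • (1 : Matrix E E ℝ)) := by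
    simp [smul_comm a β B]
  have hschur : (b • 1 - c • vecMulVec 1 1) * (a • (1 : Matrix E E ℝ)) - (-β • Bᵀ) * (-β • B) =
      (a * b) • 1 - (β ^ 2 • (Bᵀ * B) + (a * c) • vecMulVec 1 1) := by
    rw [Matrix.mul_smul, Matrix.mul_one, Matrix.smul_mul, Matrix.mul_smul]
    module
  have h := det_fromBlocks_mul_det_of_mul_eq_mul hcomm (-β • Bᵀ) (b • 1 - c • vecMulVec 1 1)
  rw [hschur, det_smul, det_smul, det_one, det_one, mul_one, mul_one] at h
  rw [eval_charpoly_eq_det_smul_one_sub, ← h, incidenceBlocks, mul_comm]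

theorem det_incidenceBlocks_of_transpose_mul_self {s : ℝ} (hB : Bᵀ * B = s • 1)
    (hle : Fintype.card E ≤ Fintype.card V) (a b c β : ℝ) :
    (incidenceBlocks B a b c β).det = a ^ (Fintype.card V - Fintype.card E) *
      ((a * b - β ^ 2 * s) ^ Fintype.card E -
        a * c * Fintype.card E * (a * b - β ^ 2 * s) ^ (Fintype.card E - 1)) := by
  revert a
  refine congrFun (eq_of_pow_mul_eq_pow_mul (k := Fintype.card E)
    (continuous_det_incidenceBlocks B b c β) (by fun_prop) fun a => ?_)
  rw [pow_card_mul_det_incidenceBlocks, hB, smul_smul, eval_charpoly_smul_one_add,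
    charpoly_smul_vecMulVec_one, ← mul_assoc, ← pow_add, Nat.add_sub_cancel' hle]
  simp

theorem det_incidenceBlocks_of_card_le {r s : ℝ} (hrow : B *ᵥ 1 = r • 1) (hcol : 1 ᵥ* B = s • 1)
    (hs : s ≠ 0) (hle : Fintype.card V ≤ Fintype.card E) (a b c β : ℝ) :
    (incidenceBlocks B a b c β).det = b ^ (Fintype.card E - Fintype.card V) *
      (β ^ 2 • (B * Bᵀ) + (a * c * r / s) • vecMulVec 1 1).charpoly.eval (a * b) := by
  revert a
  refine congrFun (eq_of_pow_mul_eq_pow_mul (k := Fintype.card E)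
    (continuous_det_incidenceBlocks B b c β) ?_ fun a => ?_)
  · simp only [eval_charpoly_eq_det_smul_one_sub]
    fun_prop
  rw [pow_card_mul_det_incidenceBlocks,
    charpoly_transpose_mul_self_add_vecMulVec_one hrow hcol hs hle, eval_mul, eval_pow, eval_X,
    mul_pow, ← mul_assoc, ← mul_assoc, ← mul_assoc, ← pow_add, Nat.add_sub_cancel' hle]

end IncidenceBlocks

theorem vecMulVec_one_mul_inv_mul_vecMulVec_one {m n o : Type*} [Fintype n] [DecidableEq n]
    (M : Matrix n n ℝ) (x : ℝ) :
    (vecMulVec 1 1 : Matrix m n ℝ) * (x • 1 - M)⁻¹ * (vecMulVec 1 1 : Matrix n o ℝ) =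
      coronal M x • vecMulVec 1 1 := by
  have hcoronal : coronal M x = ∑ i, ∑ j, (x • (1 : Matrix n n ℝ) - M)⁻¹ i j := by
    unfold coronal
    congr!
  ext i j
  simp only [hcoronal, Matrix.mul_apply, vecMulVec_apply, Pi.one_apply, one_mul, mul_one,
    Matrix.smul_apply, smul_eq_mul]
  exact Finset.sum_comm

section EdgeIncMatrix

variable {V : Type*} (G : SimpleGraph V)

/-- The vertex-edge incidence matrix of `G`. Unlike `SimpleGraph.incMatrix`, whose columns are
indexed by all of `Sym2 V`, it has one column for each edge of `G`. -/
def edgeIncMatrix : Matrix V G.edgeSet ℝ :=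
  .of fun v e => if v ∈ (e : Sym2 V) then 1 else 0

theorem edgeIncMatrix_apply_eq_incMatrix [DecidableEq V] (v : V) (e : G.edgeSet) :
    edgeIncMatrix G v e = G.incMatrix ℝ v e := by
  simp [edgeIncMatrix, SimpleGraph.incMatrix_apply', SimpleGraph.incidenceSet]

variable [Fintype V]

theorem one_vecMul_edgeIncMatrix : 1 ᵥ* edgeIncMatrix G = (2 : ℝ) • 1 := by
  ext e
  simpa [vecMul, dotProduct, edgeIncMatrix_apply_eq_incMatrix] using
    G.sum_incMatrix_apply_of_mem_edgeSet e.2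

variable [Fintype G.edgeSet]

theorem sum_edgeSet_eq_sum_of_notMem {M : Type*} [AddCommMonoid M] (f : Sym2 V → M)
    (hf : ∀ e ∉ G.edgeSet, f e = 0) : ∑ e : G.edgeSet, f e = ∑ e, f e :=
  Fintype.sum_of_injective _ Subtype.val_injective _ _ (by simpa using hf) fun _ => rfl

theorem edgeIncMatrix_mulVec_one : edgeIncMatrix G *ᵥ 1 = fun v => (G.degree v : ℝ) := by
  ext v
  simp only [mulVec, dotProduct, Pi.one_apply, mul_one, edgeIncMatrix_apply_eq_incMatrix]
  rw [sum_edgeSet_eq_sum_of_notMem G (G.incMatrix ℝ v)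
    fun e he => G.incMatrix_of_notMem_incidenceSet fun h => he h.1, G.sum_incMatrix_apply]

theorem edgeIncMatrix_mul_transpose [DecidableEq V] :
    edgeIncMatrix G * (edgeIncMatrix G)ᵀ =
      diagonal (fun v => (G.degree v : ℝ)) + G.adjMatrix ℝ := by
  have hinc : edgeIncMatrix G * (edgeIncMatrix G)ᵀ = G.incMatrix ℝ * (G.incMatrix ℝ)ᵀ := by
    ext v w
    simp only [Matrix.mul_apply, transpose_apply, edgeIncMatrix_apply_eq_incMatrix]
    exact sum_edgeSet_eq_sum_of_notMem G (fun e => G.incMatrix ℝ v e * G.incMatrix ℝ w e)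
      fun e he => by rw [G.incMatrix_of_notMem_incidenceSet fun h => he h.1, zero_mul]
  rw [hinc, G.incMatrix_mul_transpose]
  ext v w
  rcases eq_or_ne v w with rfl | hvw
  · simp
  · simp [hvw]

end EdgeIncMatrix

section Regular

variable {V : Type*} [Fintype V] {G : SimpleGraph V} {r : ℕ}

theorem card_mul_eq_two_mul_card_edgeSet [Fintype G.edgeSet] (hG : G.IsRegularOfDegree r) :
    Fintype.card V * r = 2 * Fintype.card G.edgeSet := by
  calc Fintype.card V * r = ∑ v, G.degree v := by simp [hG.degree_eq]
    _ = 2 * Fintype.card G.edgeSet := by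
      rw [G.sum_degrees_eq_twice_card_edges, ← Set.toFinset_card]
      congr!

theorem card_edgeSet_eq_one [Fintype G.edgeSet] (hconn : G.Connected)
    (hG : G.IsRegularOfDegree 1) : Fintype.card G.edgeSet = 1 := by
  have hcard := hconn.card_vert_le_card_edgeSet_add_one
  have hpos := Fintype.card_pos_iff.mpr hconn.nonempty
  have hsum := card_mul_eq_two_mul_card_edgeSet hG
  simp only [Nat.card_eq_fintype_card] at hcard
  omega

theorem transpose_edgeIncMatrix_mul_self [DecidableEq G.edgeSet]
    (hG : G.IsRegularOfDegree 1) :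
    (edgeIncMatrix G)ᵀ * edgeIncMatrix G = (2 : ℝ) • 1 := by
  ext e f
  have hmul (v : V) : edgeIncMatrix G v e * edgeIncMatrix G v f =
      if e = f then edgeIncMatrix G v e else 0 := by
    rcases eq_or_ne e f with rfl | hef
    · simp [edgeIncMatrix]
    · suffices v ∈ (f : Sym2 V) → v ∉ (e : Sym2 V) by simpa [edgeIncMatrix, hef] using this
      rintro ⟨w, hw⟩ ⟨u, hu⟩
      have hvu : G.Adj v u := G.mem_edgeSet.mp (hu ▸ e.2)
      have hvw : G.Adj v w := G.mem_edgeSet.mp (hw ▸ f.2)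
      have huw := (SimpleGraph.degree_eq_one_iff_existsUnique_adj.mp (hG v)).unique hvu hvw
      exact hef (Subtype.ext (by rw [hu, hw, huw]))
  have hcol : ∑ v, edgeIncMatrix G v e = 2 := by
    simpa [vecMul, dotProduct] using congrFun (one_vecMul_edgeIncMatrix G) e
  simp only [Matrix.mul_apply, transpose_apply, hmul, Matrix.smul_apply, one_apply]
  split_ifs <;> simp [hcol]

theorem diagonal_degree_eq_smul_one [DecidableEq V] (hG : G.IsRegularOfDegree r) :
    diagonal (fun v => (G.degree v : ℝ)) = (r : ℝ) • (1 : Matrix V V ℝ) := by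
  simp [hG.degree_eq, smul_one_eq_diagonal]

theorem Aalpha_eq_of_isRegularOfDegree [DecidableEq V] (hG : G.IsRegularOfDegree r) (α : ℝ) :
    Aalpha G α = (α * r) • 1 + (1 - α) • G.adjMatrix ℝ := by
  ext v w
  rcases eq_or_ne v w with rfl | hvw
  · simp [Aalpha, hG.degree_eq v]
  · simp [Aalpha, hvw]

theorem Aalpha_mulVec_one (hG : G.IsRegularOfDegree r) (α : ℝ) :
    Aalpha G α *ᵥ 1 = (r : ℝ) • 1 := by
  have hadj : G.adjMatrix ℝ *ᵥ 1 = (r : ℝ) • 1 := by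
    ext v
    simp [hG.degree_eq v]
  rw [Aalpha_eq_of_isRegularOfDegree hG, add_mulVec, smul_mulVec, smul_mulVec, hadj, one_mulVec]
  module

theorem sq_smul_edgeIncMatrix_mul_transpose [Fintype G.edgeSet] [DecidableEq V]
    (hG : G.IsRegularOfDegree r) (α : ℝ) :
    (1 - α) ^ 2 • (edgeIncMatrix G * (edgeIncMatrix G)ᵀ) =
      ((1 - α) * r * (1 - 2 * α)) • 1 + (1 - α) • Aalpha G α := by
  rw [edgeIncMatrix_mul_transpose, diagonal_degree_eq_smul_one hG,
    Aalpha_eq_of_isRegularOfDegree hG]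
  module

theorem eq_degree_of_forall_le [DecidableEq V] {ι : Type*} [Fintype ι] [Nonempty V]
    (hG : G.IsRegularOfDegree r) {α : ℝ} (hα : α ≤ 1) {μ : ι → ℝ} {i₀ : ι}
    (hμ : ∀ i, μ i ≤ μ i₀) (hμch : (Aalpha G α).charpoly = ∏ i, (X - C (μ i))) : μ i₀ = r := by
  have hroot (t : ℝ) : (Aalpha G α).charpoly.IsRoot t ↔ ∃ i, μ i = t := by
    simp [hμch, IsRoot.def, eval_prod, Finset.prod_eq_zero_iff, sub_eq_zero, eq_comm (a := t)]
  obtain ⟨i, hi⟩ := (hroot r).mp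
    (isRoot_charpoly_of_mulVec_eq_smul one_ne_zero (Aalpha_mulVec_one hG α))
  refine le_antisymm (le_of_isRoot_charpoly_of_sum_row_le (M := Aalpha G α) (fun v w hvw => ?_)
    (fun v => ?_) ((hroot _).mpr ⟨i₀, rfl⟩)) (hi ▸ hμ i)
  · rw [Aalpha_eq_of_isRegularOfDegree hG, Matrix.add_apply, Matrix.smul_apply, one_apply_ne hvw,
      smul_zero, zero_add, Matrix.smul_apply, SimpleGraph.adjMatrix_apply]
    exact mul_nonneg (sub_nonneg.mpr hα) (by split_ifs <;> norm_num)
  · simpa [mulVec, dotProduct] using (congrFun (Aalpha_mulVec_one hG α) v).le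

theorem eval_charpoly_sq_smul_edgeIncMatrix_mul_transpose_add [Fintype G.edgeSet] [DecidableEq V]
    {ι : Type*} [Fintype ι] [DecidableEq ι] (hG : G.IsRegularOfDegree r) {α : ℝ} {μ : ι → ℝ}
    {i₀ : ι} (hμ : (Aalpha G α).charpoly = ∏ i, (X - C (μ i))) (hi₀ : μ i₀ = r) (q t : ℝ) :
    ((1 - α) ^ 2 • (edgeIncMatrix G * (edgeIncMatrix G)ᵀ) + q • vecMulVec 1 1).charpoly.eval t =
      (t - 2 * r * (1 - α) ^ 2 - q * Fintype.card V) *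
        ∏ i with i ≠ i₀, (t - (1 - α) * r * (1 - 2 * α) - (1 - α) * μ i) := by
  have hone : ((1 - α) • Aalpha G α) *ᵥ 1 = ((1 - α) * μ i₀) • 1 := by
    rw [smul_mulVec, Aalpha_mulVec_one hG, smul_smul, hi₀]
  rw [sq_smul_edgeIncMatrix_mul_transpose hG, add_assoc, eval_charpoly_smul_one_add,
    ← vecMulVec_smul, charpoly_add_vecMulVec_eq_mul_prod (charpoly_smul_eq_prod hμ _) hone]
  simp only [eval_mul, eval_prod, eval_sub, eval_X, eval_C, smul_dotProduct, one_dotProduct_one,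
    smul_eq_mul, hi₀]
  ring

theorem det_incidenceBlocks_edgeIncMatrix_of_one [Fintype G.edgeSet] [DecidableEq G.edgeSet]
    [DecidableEq V] [Nonempty V] (hG : G.IsRegularOfDegree 1) (a b c β : ℝ) :
    (incidenceBlocks (edgeIncMatrix G) a b c β).det =
      a ^ Fintype.card G.edgeSet * (a * b - 2 * β ^ 2 - Fintype.card G.edgeSet * a * c) *
        (a * b - 2 * β ^ 2) ^ (Fintype.card G.edgeSet - 1) := by
  have hcard := card_mul_eq_two_mul_card_edgeSet hG
  have hpos : 0 < Fintype.card V := Fintype.card_pos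
  obtain ⟨k, hk⟩ : ∃ k, Fintype.card G.edgeSet = k + 1 := Nat.exists_eq_add_one.mpr (by omega)
  have hdiff : Fintype.card V - Fintype.card G.edgeSet = k + 1 := by omega
  rw [det_incidenceBlocks_of_transpose_mul_self _ (transpose_edgeIncMatrix_mul_self hG) (by omega),
    hdiff, hk, Nat.add_sub_cancel]
  ring

theorem det_incidenceBlocks_edgeIncMatrix_of_two_le [Fintype G.edgeSet] [DecidableEq G.edgeSet]
    [DecidableEq V] {ι : Type*} [Fintype ι] [DecidableEq ι] (hG : G.IsRegularOfDegree r)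
    (hr : 2 ≤ r) {α : ℝ} {μ : ι → ℝ} {i₀ : ι}
    (hμ : (Aalpha G α).charpoly = ∏ i, (X - C (μ i))) (hi₀ : μ i₀ = r) (a b c : ℝ) :
    (incidenceBlocks (edgeIncMatrix G) a b c (1 - α)).det =
      b ^ (Fintype.card G.edgeSet - Fintype.card V) *
        ((a * b - 2 * r * (1 - α) ^ 2 - Fintype.card G.edgeSet * a * c) *
          ∏ i with i ≠ i₀, (a * b - (1 - α) * r * (1 - 2 * α) - (1 - α) * μ i)) := by
  have hcard := card_mul_eq_two_mul_card_edgeSet hG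
  have hle : Fintype.card V ≤ Fintype.card G.edgeSet := by nlinarith
  have hshift : a * c * r / 2 * Fintype.card V = Fintype.card G.edgeSet * a * c := by
    have hcast : (Fintype.card V : ℝ) * r = 2 * Fintype.card G.edgeSet := mod_cast hcard
    linear_combination a * c / 2 * hcast
  have hrow : edgeIncMatrix G *ᵥ 1 = (r : ℝ) • 1 := by
    ext v
    simp [edgeIncMatrix_mulVec_one, hG.degree_eq v]
  rw [det_incidenceBlocks_of_card_le _ hrow (one_vecMul_edgeIncMatrix G) two_ne_zero hle,
    eval_charpoly_sq_smul_edgeIncMatrix_mul_transpose_add hG hμ hi₀, hshift]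

end Regular

section Join

variable {V₁ V₂ : Type*} (G₁ : SimpleGraph V₁) (G₂ : SimpleGraph V₂)

theorem adjMatrix_subdivisionEdgeJoin :
    (subdivisionEdgeJoin G₁ G₂).adjMatrix ℝ =
      fromBlocks 0 (fromCols (edgeIncMatrix G₁) 0) (fromRows (edgeIncMatrix G₁)ᵀ 0)
        (fromBlocks 0 (vecMulVec 1 1) (vecMulVec 1 1) (G₂.adjMatrix ℝ)) := by
  have hadj (u t : V₂) : u ≠ t ∧ (G₂.Adj u t ∨ G₂.Adj t u) ↔ G₂.Adj u t :=
    ⟨fun h => h.2.elim id .symm, fun h => ⟨h.ne, .inl h⟩⟩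
  ext (v | e | u) (w | f | t) <;> rw [SimpleGraph.adjMatrix_apply] <;>
    simp [subdivisionEdgeJoin, edgeIncMatrix, vecMulVec_apply, SimpleGraph.adjMatrix_apply, hadj,
      -vecMulVec_one, -one_vecMulVec]

variable [Fintype V₁] [Fintype V₂] [Fintype G₁.edgeSet]

theorem degree_subdivisionEdgeJoin :
    (fun v => ((subdivisionEdgeJoin G₁ G₂).degree v : ℝ)) =
      Sum.elim (fun v => (G₁.degree v : ℝ)) (Sum.elim (fun _ => 2 + (Fintype.card V₂ : ℝ))
        fun w => (Fintype.card G₁.edgeSet : ℝ) + G₂.degree w) := by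
  have hdeg : (fun v => ((subdivisionEdgeJoin G₁ G₂).degree v : ℝ)) =
      (subdivisionEdgeJoin G₁ G₂).adjMatrix ℝ *ᵥ Sum.elim 1 (Sum.elim 1 1) := by
    ext v
    simp
  rw [hdeg, adjMatrix_subdivisionEdgeJoin, fromBlocks_mulVec]
  ext (v | e | w)
  · simp [fromCols_mulVec, edgeIncMatrix_mulVec_one]
  · simp [fromBlocks_mulVec, mulVec_transpose, one_vecMul_edgeIncMatrix, vecMulVec_mulVec,
      -vecMulVec_one, -one_vecMulVec]
  · simp [fromBlocks_mulVec, vecMulVec_mulVec, -vecMulVec_one, -one_vecMulVec]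

variable [DecidableEq V₁] [DecidableEq V₂] [DecidableEq G₁.edgeSet]

theorem Aalpha_subdivisionEdgeJoin (α : ℝ) :
    Aalpha (subdivisionEdgeJoin G₁ G₂) α =
      fromBlocks (α • diagonal fun v => (G₁.degree v : ℝ))
        (fromCols ((1 - α) • edgeIncMatrix G₁) 0) (fromRows ((1 - α) • (edgeIncMatrix G₁)ᵀ) 0)
        (fromBlocks ((α * (2 + Fintype.card V₂)) • 1) ((1 - α) • vecMulVec 1 1)
          ((1 - α) • vecMulVec 1 1)
          ((α * Fintype.card G₁.edgeSet) • 1 + Aalpha G₂ α)) := by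
  rw [Aalpha, degree_subdivisionEdgeJoin, adjMatrix_subdivisionEdgeJoin]
  ext (v | e | w) (v' | e' | w') <;>
    simp [Aalpha, diagonal_apply, one_apply, vecMulVec_apply, mul_add, ite_add_zero, add_assoc,
      -vecMulVec_one, -one_vecMulVec]

variable {G₁ G₂} {r : ℕ} {α x : ℝ}

theorem eval_charpoly_Aalpha_subdivisionEdgeJoin (hG₁ : G₁.IsRegularOfDegree r)
    (hx : ((x - α * Fintype.card G₁.edgeSet) • 1 - Aalpha G₂ α).det ≠ 0) :
    (Aalpha (subdivisionEdgeJoin G₁ G₂) α).charpoly.eval x =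
      (Aalpha G₂ α).charpoly.eval (x - α * Fintype.card G₁.edgeSet) *
        (incidenceBlocks (edgeIncMatrix G₁) (x - α * r) (x - α * (2 + Fintype.card V₂))
          ((1 - α) ^ 2 * coronal (Aalpha G₂ α) (x - α * Fintype.card G₁.edgeSet)) (1 - α)).det := by
  set D := (x - α * Fintype.card G₁.edgeSet) • 1 - Aalpha G₂ α with hD
  have hblocks : x • 1 - Aalpha (subdivisionEdgeJoin G₁ G₂) α =
      fromBlocks ((x - α * r) • 1) (fromCols (-(1 - α) • edgeIncMatrix G₁) 0)
        (fromRows (-(1 - α) • (edgeIncMatrix G₁)ᵀ) 0)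
        (fromBlocks ((x - α * (2 + Fintype.card V₂)) • 1) (-(1 - α) • vecMulVec 1 1)
          (-(1 - α) • vecMulVec 1 1) D) := by
    rw [Aalpha_subdivisionEdgeJoin, diagonal_degree_eq_smul_one hG₁, hD]
    ext (v | e | w) (v' | e' | w') <;>
      simp only [Matrix.sub_apply, Matrix.smul_apply, Matrix.add_apply, Matrix.zero_apply,
        one_apply, Sum.inl.injEq, Sum.inr.injEq, reduceCtorEq, ↓reduceIte, smul_eq_mul,
        fromBlocks_apply₁₁, fromBlocks_apply₁₂, fromBlocks_apply₂₁, fromBlocks_apply₂₂,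
        fromCols_apply_inl, fromCols_apply_inr, fromRows_apply_inl, fromRows_apply_inr] <;> ring
  have hschur : (-(1 - α) • vecMulVec 1 1 : Matrix G₁.edgeSet V₂ ℝ) * D⁻¹ *
      (-(1 - α) • vecMulVec 1 1 : Matrix V₂ G₁.edgeSet ℝ) =
      ((1 - α) ^ 2 * coronal (Aalpha G₂ α) (x - α * Fintype.card G₁.edgeSet)) •
        vecMulVec 1 1 := by
    rw [Matrix.smul_mul, Matrix.smul_mul, Matrix.mul_smul, hD,
      vecMulVec_one_mul_inv_mul_vecMulVec_one]
    module
  rw [eval_charpoly_eq_det_smul_one_sub, eval_charpoly_eq_det_smul_one_sub, hblocks,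
    det_fromBlocks_fromCols_fromRows_zero _ _ _ _ _ _ (isUnit_iff_ne_zero.mpr hx), hschur,
    incidenceBlocks]

end Join

theorem Aalpha_charpoly_subdivisionEdgeJoin_general {V₁ V₂ ι : Type*} [Fintype V₁] [Fintype V₂]
    [Fintype ι] [DecidableEq V₁] [DecidableEq V₂] [DecidableEq ι] (G₁ : SimpleGraph V₁)
    (G₂ : SimpleGraph V₂) {r : ℕ} (hreg : G₁.IsRegularOfDegree r) {α : ℝ} (hα : α ≤ 1)
    (μ : ι → ℝ) (i₀ : ι) (hμ : ∀ i, μ i ≤ μ i₀)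
    (hμch : (Aalpha G₁ α).charpoly = ∏ i, (X - C (μ i))) (x : ℝ)
    (hx : ((x - α * Fintype.card G₁.edgeSet) • 1 - Aalpha G₂ α).det ≠ 0) :
    (r = 1 →
      (Aalpha (subdivisionEdgeJoin G₁ G₂) α).charpoly.eval x =
        (x - α) ^ Fintype.card G₁.edgeSet *
          (Aalpha G₂ α).charpoly.eval (x - α * Fintype.card G₁.edgeSet) *
          (x ^ 2 - α * (3 + Fintype.card V₂) * x + (α ^ 2 * Fintype.card V₂ + 4 * α - 2)
            - Fintype.card G₁.edgeSet * (1 - α) ^ 2 * (x - α) *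
              coronal (Aalpha G₂ α) (x - α * Fintype.card G₁.edgeSet)) *
          (x ^ 2 - α * (3 + Fintype.card V₂) * x + (α ^ 2 * Fintype.card V₂ + 4 * α - 2)) ^
            (Fintype.card G₁.edgeSet - 1)) ∧
    (2 ≤ r →
      (Aalpha (subdivisionEdgeJoin G₁ G₂) α).charpoly.eval x =
        (x - 2 * α - α * Fintype.card V₂) ^ (Fintype.card G₁.edgeSet - Fintype.card V₁) *
          (Aalpha G₂ α).charpoly.eval (x - α * Fintype.card G₁.edgeSet) *
          (x ^ 2 - α * (2 + r + Fintype.card V₂) * x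
            + r * (α ^ 2 * Fintype.card V₂ + 4 * α - 2)
            - Fintype.card G₁.edgeSet * (1 - α) ^ 2 * (x - α * r) *
              coronal (Aalpha G₂ α) (x - α * Fintype.card G₁.edgeSet)) *
          ∏ i with i ≠ i₀, (x ^ 2 - α * (2 + r + Fintype.card V₂) * x
            + r * (α ^ 2 * Fintype.card V₂ + 3 * α - 1) - (1 - α) * μ i)) := by
  have _ : Nonempty V₁ := by
    rw [← Fintype.card_pos_iff, card_eq_card_of_charpoly_eq_prod hμch]
    exact Fintype.card_pos_iff.mpr ⟨i₀⟩
  constructor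
  · rintro rfl
    rw [eval_charpoly_Aalpha_subdivisionEdgeJoin hreg hx,
      det_incidenceBlocks_edgeIncMatrix_of_one hreg]
    have hab : (x - α * (1 : ℕ)) * (x - α * (2 + Fintype.card V₂)) - 2 * (1 - α) ^ 2 =
        x ^ 2 - α * (3 + Fintype.card V₂) * x + (α ^ 2 * Fintype.card V₂ + 4 * α - 2) := by
      push_cast
      ring
    rw [hab]
    push_cast
    ring
  · intro hr
    rw [eval_charpoly_Aalpha_subdivisionEdgeJoin hreg hx,
      det_incidenceBlocks_edgeIncMatrix_of_two_le hreg hr hμch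
        (eq_degree_of_forall_le hreg hα hμ hμch), ← mul_assoc, ← mul_assoc]
    congr 1
    · ring
    · exact Finset.prod_congr rfl fun i _ => by ring

/-- Theorem 4.1: the `A_α`-characteristic polynomial of the subdivision-edge join
`G₁ ∨̲ G₂` of an `r₁`-regular graph `G₁` (on `n₁` vertices and `m₁` edges) and an
arbitrary graph `G₂` (on `n₂` vertices), in the cases `r₁ = 1` and `r₁ ≥ 2`. -/
theorem Aalpha_charpoly_subdivisionEdgeJoin
    {n₁ m₁ n₂ r₁ : ℕ} (G₁ : SimpleGraph (Fin n₁)) (G₂ : SimpleGraph (Fin n₂))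
    (hconn : G₁.Connected) (hreg : G₁.IsRegularOfDegree r₁)
    (hm : Fintype.card G₁.edgeSet = m₁)
    (α : ℝ) (hα : α ∈ Set.Icc (0 : ℝ) 1)
    (μ : Fin n₁ → ℝ) (hμ : Antitone μ)
    (hμch : (Aalpha G₁ α).charpoly = ∏ i, (X - C (μ i))) :
    (r₁ = 1 → ∀ x : ℝ,
      ((x - α) • (1 : Matrix (Fin n₂) (Fin n₂) ℝ) - Aalpha G₂ α).det ≠ 0 →
      ((Aalpha (subdivisionEdgeJoin G₁ G₂) α).charpoly).eval x =
        (x - α) * ((Aalpha G₂ α).charpoly).eval (x - α) *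
          (x ^ 2 - α * (3 + n₂) * x + (α ^ 2 * n₂ + 4 * α - 2)
            - (1 - α) ^ 2 * (x - α) * coronal (Aalpha G₂ α) (x - α))) ∧
    (2 ≤ r₁ → ∀ x : ℝ,
      ((x - α * m₁) • (1 : Matrix (Fin n₂) (Fin n₂) ℝ) - Aalpha G₂ α).det ≠ 0 →
      ((Aalpha (subdivisionEdgeJoin G₁ G₂) α).charpoly).eval x =
        (x - 2 * α - α * n₂) ^ (m₁ - n₁) *
          ((Aalpha G₂ α).charpoly).eval (x - α * m₁) *
          (x ^ 2 - α * (2 + r₁ + n₂) * x + r₁ * (α ^ 2 * n₂ + 4 * α - 2)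
            - m₁ * (1 - α) ^ 2 * (x - α * r₁) * coronal (Aalpha G₂ α) (x - α * m₁)) *
          (∏ i ∈ Finset.univ.filter (fun i : Fin n₁ => i.val ≠ 0),
            (x ^ 2 - α * (2 + r₁ + n₂) * x + r₁ * (α ^ 2 * n₂ + 3 * α - 1)
              - (1 - α) * μ i))) := by
  subst hm
  obtain ⟨v⟩ := hconn.nonempty
  have hgeneral := Aalpha_charpoly_subdivisionEdgeJoin_general G₁ G₂ hreg hα.2 μ ⟨0, v.pos⟩
    (fun i => hμ (Fin.le_def.mpr i.val.zero_le)) hμch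
  refine ⟨?_, fun hr x hx => by simpa [Fin.ext_iff] using (hgeneral x hx).2 hr⟩
  rintro rfl x hx
  have hm := card_edgeSet_eq_one hconn hreg
  simpa [hm] using (hgeneral x (by simpa [hm] using hx)).1 rfl
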